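/- Let α and β be nonempty permutations with |α| = a, and let k be an integer with 0 ≤ k ≤ a. Then there exists an integer c such that μ(1, W_k(α,β)) = c · μ(1,β); that is, the principal Möbius function of any wedge permutation W_k(α,β) is an integer multiple of the principal Möbius function of β. -/

import Mathlib

/-!
The permutation pattern poset and its Möbius function.

A permutation of length `n` is represented as an element of the symmetric
group on `Fin n`; the collection of all permutations of all lengths is the
sigma type `PPerm`.  Pattern containment `PPerm.Le` makes `PPerm` into the
permutation pattern poset, and `mu` is its Möbius function, defined by the
usual recursion `μ(σ,σ) = 1`, `μ(σ,π) = -∑_{σ ≤ λ < π} μ(σ,λ)` for `σ < π`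
and `μ(σ,π) = 0` otherwise.
-/

open scoped Classical

/-- A permutation of an arbitrary finite length `n`, as an element of the
symmetric group on `Fin n`. -/
abbrev PPerm : Type := Σ n : ℕ, Equiv.Perm (Fin n)

namespace PPerm

/-- Classical pattern containment `σ ≤ π`: there is a strictly increasing map
of positions along which `π` realises the same relative order as `σ`. -/
def Le (σ π : PPerm) : Prop :=
  ∃ f : Fin σ.1 → Fin π.1, StrictMono f ∧
    ∀ a b : Fin σ.1, σ.2 a < σ.2 b ↔ π.2 (f a) < π.2 (f b)

/-- Strict pattern containment. -/
def Lt (σ π : PPerm) : Prop := Le σ π ∧ σ ≠ π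

/-- The permutation `1` of length one. -/
def one : PPerm := ⟨1, 1⟩

/-- The direct sum `α ⊕ β` of two permutations: `β` is placed after and
above `α`. -/
def dsum (α β : PPerm) : PPerm :=
  ⟨α.1 + β.1, finSumFinEquiv.symm.trans ((Equiv.sumCongr α.2 β.2).trans finSumFinEquiv)⟩

end PPerm

/-- Fuelled recursion computing the Möbius function of the permutation
pattern poset.  Any `λ` with `σ ≤ λ < π` has length `< |π|`, so for any
fuel `≥ |π| + 1` this computes the standard recursion
`μ(σ,σ) = 1`, `μ(σ,π) = -∑_{σ ≤ λ < π} μ(σ,λ)` for `σ < π`, and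
`μ(σ,π) = 0` when `σ ≰ π`. -/
noncomputable def muAux : ℕ → PPerm → PPerm → ℤ
  | 0, _, _ => 0
  | n + 1, σ, π =>
    if σ = π then 1
    else if PPerm.Le σ π then
      - ∑ m ∈ Finset.range π.1,
          ∑ p ∈ Finset.univ.filter
              (fun p : Equiv.Perm (Fin m) => PPerm.Le σ ⟨m, p⟩ ∧ PPerm.Le ⟨m, p⟩ π),
            muAux n σ ⟨m, p⟩
    else 0

/-- The Möbius function of the permutation pattern poset. -/
noncomputable def mu (σ π : PPerm) : ℤ := muAux (π.1 + 1) σ π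

/-- The closed interval `[σ, π]` of the permutation pattern poset, as a
finset (any `λ ≤ π` has length `≤ |π|`). -/
noncomputable def intervalCC (σ π : PPerm) : Finset PPerm :=
  (Finset.range (π.1 + 1)).biUnion fun m =>
    (Finset.univ.filter fun p : Equiv.Perm (Fin m) =>
        PPerm.Le σ ⟨m, p⟩ ∧ PPerm.Le ⟨m, p⟩ π).image fun p => (⟨m, p⟩ : PPerm)

/-- The half-open interval `[σ, π)` of the permutation pattern poset. -/
noncomputable def intervalCO (σ π : PPerm) : Finset PPerm :=
  (intervalCC σ π).filter fun lam => lam ≠ π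

/-- `π` is the wedge permutation `W_k(α,β)`: writing `a = |α|` and `b = |β|`,
`π` is the permutation of length `a + b` with (1-indexed) entry sequence
`α(1), …, α(k), β(1)+a, …, β(b)+a, α(k+1), …, α(a)`. -/
def IsWedge (α β : PPerm) (k : ℕ) (π : PPerm) : Prop :=
  π.1 = α.1 + β.1 ∧
    (∀ (s : Fin α.1) (p : Fin π.1),
        (((s : ℕ) < k ∧ (p : ℕ) = (s : ℕ)) ∨
          (k ≤ (s : ℕ) ∧ (p : ℕ) = β.1 + (s : ℕ))) →
        (π.2 p : ℕ) = (α.2 s : ℕ)) ∧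
    ∀ (t : Fin β.1) (p : Fin π.1), (p : ℕ) = k + (t : ℕ) →
      (π.2 p : ℕ) = α.1 + (β.2 t : ℕ)

/-!
Group the nonempty permutations `l ≤ W_k(α,β)` by their top part: the least nonempty `γ` such that
`l ≤ W_k(α,γ)`. It exists because any way of placing `l` in such a wedge puts a set of highest
points of `l` into `γ`, and these sets form a chain. The `l` whose top part is at most `γ` make up
the interval `[1, W_k(α,γ)]`, over which `μ(1,·)` sums to zero; by induction on `γ` it sums to zero
over the permutations with top part exactly `γ`. For `β ≠ 1` every permutation with top part `β` is
a wedge of `β` with a part of `α`, and `W_k(α,β)` is the only one using all of `α`, so the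
divisibility follows by induction on the length of `α`.
-/

theorem strictMono_eq_id_of_surjective {X : Type*} [LinearOrder X] [WellFoundedLT X] {f : X → X}
    (hf : StrictMono f) (hsurj : f.Surjective) : f = id :=
  (hf.range_inj strictMono_id).1 <| by rw [hsurj.range_eq, Set.range_id]

namespace PPerm

instance : Preorder PPerm where
  le := Le
  le_refl _ := ⟨id, strictMono_id, fun _ _ => Iff.rfl⟩
  le_trans := by
    rintro _ _ _ ⟨f, hf, hf'⟩ ⟨g, hg, hg'⟩
    exact ⟨g ∘ f, hg.comp hf, fun x y => (hf' x y).trans (hg' _ _)⟩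

theorem length_le_of_le {σ π : PPerm} : σ ≤ π → σ.1 ≤ π.1 := by
  rintro ⟨f, hf, -⟩
  simpa using Fintype.card_le_of_injective f hf.injective

theorem eq_of_le_of_length_le {σ π : PPerm} (h : σ ≤ π) (hlen : π.1 ≤ σ.1) : σ = π := by
  obtain ⟨n, s⟩ := σ
  obtain ⟨m, t⟩ := π
  obtain rfl : n = m := le_antisymm (length_le_of_le h) hlen
  obtain ⟨f, hf, hst⟩ := h
  have hf_id : f = id :=
    strictMono_eq_id_of_surjective hf (Finite.surjective_of_injective hf.injective)
  have hmono : StrictMono (t ∘ s.symm) := fun x y hxy => by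
    simpa [hf_id, hxy] using hst (s.symm x) (s.symm y)
  have hts : t ∘ s.symm = id :=
    strictMono_eq_id_of_surjective hmono (t.surjective.comp s.symm.surjective)
  have hs : s = t := Equiv.ext fun x => by simpa using (congrFun hts (s x)).symm
  rw [hs]

instance : PartialOrder PPerm where
  le_antisymm _ _ h h' := eq_of_le_of_length_le h (length_le_of_le h')

theorem length_strictMono : StrictMono fun σ : PPerm => σ.1 := fun _ _ h =>
  lt_of_not_ge fun hlen => h.ne (eq_of_le_of_length_le h.le hlen)

theorem one_le_iff {σ : PPerm} : one ≤ σ ↔ 0 < σ.1 := by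
  refine ⟨length_le_of_le, fun h => ⟨fun _ => ⟨0, h⟩, Subsingleton.strictMono (α := Fin 1) _, ?_⟩⟩
  intro x y
  simp [Subsingleton.elim (α := Fin 1) x y]

theorem one_le_or_le_one (σ : PPerm) : one ≤ σ ∨ σ ≤ one := by
  obtain ⟨n | n, s⟩ := σ
  · exact .inr ⟨finZeroElim, fun x => x.elim0, fun x => x.elim0⟩
  · exact .inl (one_le_iff.2 n.succ_pos)

end PPerm

theorem mem_intervalCC {σ π l : PPerm} : l ∈ intervalCC σ π ↔ σ ≤ l ∧ l ≤ π := by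
  simp only [intervalCC, Finset.mem_biUnion, Finset.mem_range, Finset.mem_image,
    Finset.mem_filter, Finset.mem_univ, true_and]
  constructor
  · rintro ⟨m, -, p, hp, rfl⟩
    exact hp
  · exact fun h => ⟨l.1, Nat.lt_succ_of_le (PPerm.length_le_of_le h.2), l.2, h, rfl⟩

theorem intervalCO_eq_sigma (σ π : PPerm) :
    intervalCO σ π = (Finset.range π.1).sigma fun m =>
      Finset.univ.filter fun p : Equiv.Perm (Fin m) =>
        PPerm.Le σ ⟨m, p⟩ ∧ PPerm.Le ⟨m, p⟩ π := by
  ext l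
  simp only [intervalCO, Finset.mem_filter, mem_intervalCC, Finset.mem_sigma, Finset.mem_range,
    Finset.mem_univ, true_and]
  constructor
  · exact fun ⟨h, hne⟩ => ⟨PPerm.length_strictMono (h.2.lt_of_ne hne), h⟩
  · exact fun ⟨hlen, h⟩ => ⟨h, fun hl => hlen.ne (congrArg Sigma.fst hl)⟩

theorem muAux_eq_mu (σ : PPerm) {n : ℕ} {π : PPerm} (hn : π.1 < n) :
    muAux n σ π = mu σ π := by
  induction n using Nat.strong_induction_on generalizing π with
  | _ n ih =>
    obtain ⟨n, rfl⟩ := Nat.exists_eq_add_one_of_ne_zero (Nat.ne_zero_of_lt hn)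
    simp only [mu, muAux]
    congr 3
    refine Finset.sum_congr rfl fun m hm => Finset.sum_congr rfl fun p _ => ?_
    have hm := Finset.mem_range.1 hm
    rw [ih n n.lt_succ_self (show m < n by omega), ih π.1 hn hm]

theorem mu_self (σ : PPerm) : mu σ σ = 1 := by
  simp [mu, muAux]

theorem mu_eq_neg_sum_intervalCO {σ π : PPerm} (h : σ < π) :
    mu σ π = -∑ l ∈ intervalCO σ π, mu σ l := by
  rw [mu, muAux, if_neg h.ne, if_pos (show PPerm.Le σ π from h.le), intervalCO_eq_sigma,
    Finset.sum_sigma]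
  refine congrArg _ <| Finset.sum_congr rfl fun m hm => Finset.sum_congr rfl fun p _ => ?_
  exact muAux_eq_mu σ (Finset.mem_range.1 hm)

theorem sum_intervalCC_mu {σ π : PPerm} (h : σ < π) : ∑ l ∈ intervalCC σ π, mu σ l = 0 := by
  have hπ : π ∈ intervalCC σ π := mem_intervalCC.2 ⟨h.le, le_rfl⟩
  rw [← Finset.add_sum_erase _ _ hπ, ← Finset.filter_ne', mu_eq_neg_sum_intervalCO h]
  exact neg_add_cancel _

theorem sum_fiber_eq_zero_of_sum_le_eq_zero {ι Q M : Type*} [PartialOrder Q] [DecidableEq Q]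
    [DecidableLE Q] [AddCommMonoid M] {s : Finset ι} {f : ι → Q} {F : ι → M}
    (h : ∀ i ∈ s, ∑ j ∈ s with f j ≤ f i, F j = 0) {i : ι} (hi : i ∈ s) :
    ∑ j ∈ s with f j = f i, F j = 0 := by
  induction hn : (s.filter (f · ≤ f i)).card using Nat.strong_induction_on generalizing i with
  | _ n ih =>
    have hlt : ∑ j ∈ s with f j < f i, F j = 0 := by
      rw [← Finset.sum_fiberwise_of_maps_to (t := (s.filter (f · < f i)).image f)
        fun j => Finset.mem_image_of_mem f]
      refine Finset.sum_eq_zero fun q hq => ?_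
      obtain ⟨j, hj, rfl⟩ := Finset.mem_image.1 hq
      obtain ⟨hjs, hji⟩ := Finset.mem_filter.1 hj
      have hcard : (s.filter (f · ≤ f j)).card < n := by
        rw [← hn]
        refine Finset.card_lt_card <| (Finset.ssubset_iff_of_subset ?_).2 ⟨i, ?_, ?_⟩
        · exact Finset.monotone_filter_right s fun _ _ hk => hk.trans hji.le
        · exact Finset.mem_filter.2 ⟨hi, le_rfl⟩
        · exact fun hij => hji.not_ge (Finset.mem_filter.1 hij).2
      rw [Finset.filter_filter, ← ih _ hcard hjs rfl]
      exact Finset.sum_congr (Finset.filter_congr fun k _ => and_iff_right_of_imp (· ▸ hji))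
        fun _ _ => rfl
    have hle := h i hi
    simp only [le_iff_lt_or_eq] at hle
    rwa [Finset.filter_or, Finset.sum_union, hlt, zero_add] at hle
    exact Finset.disjoint_filter.2 fun _ _ hk => hk.ne

/-- A finite set of points in the plane in general position, up to order isomorphism on both axes:
`posLT` compares points from left to right, `valLT` from bottom to top. Keeping the point set
abstract makes subpatterns and wedges available without relabelling. -/
structure PointConfig where
  Pt : Type
  [finite : Finite Pt]
  posLT : Pt → Pt → Prop
  valLT : Pt → Pt → Prop
  [posLT_strictTotal : IsStrictTotalOrder Pt posLT]
  [valLT_strictTotal : IsStrictTotalOrder Pt valLT]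

namespace PointConfig

attribute [instance] finite posLT_strictTotal valLT_strictTotal

/-- An occurrence of the pattern `C` in `D`: a map preserving and reflecting both orders. -/
structure IsEmbedding (C D : PointConfig) (f : C.Pt → D.Pt) : Prop where
  pos_iff : ∀ x y, C.posLT x y ↔ D.posLT (f x) (f y)
  val_iff : ∀ x y, C.valLT x y ↔ D.valLT (f x) (f y)

theorem IsEmbedding.id (C : PointConfig) : IsEmbedding C C id :=
  ⟨fun _ _ => Iff.rfl, fun _ _ => Iff.rfl⟩

theorem IsEmbedding.comp {C D E : PointConfig} {g : D.Pt → E.Pt} {f : C.Pt → D.Pt}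
    (hg : IsEmbedding D E g) (hf : IsEmbedding C D f) : IsEmbedding C E (g ∘ f) :=
  ⟨fun x y => (hf.pos_iff x y).trans (hg.pos_iff _ _),
    fun x y => (hf.val_iff x y).trans (hg.val_iff _ _)⟩

theorem IsEmbedding.of_comp {C D E : PointConfig} {g : D.Pt → E.Pt} {f : C.Pt → D.Pt}
    (hg : IsEmbedding D E g) (hgf : IsEmbedding C E (g ∘ f)) : IsEmbedding C D f :=
  ⟨fun x y => (hgf.pos_iff x y).trans (hg.pos_iff _ _).symm,
    fun x y => (hgf.val_iff x y).trans (hg.val_iff _ _).symm⟩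

/-- Pattern containment of configurations. It is only a preorder: mutual containment means
isomorphism. -/
instance : Preorder PointConfig where
  le C D := ∃ f, IsEmbedding C D f
  le_refl C := ⟨_, .id C⟩
  le_trans _ _ _ := fun ⟨_, hf⟩ ⟨_, hg⟩ => ⟨_, hg.comp hf⟩

theorem IsEmbedding.le {C D : PointConfig} {f : C.Pt → D.Pt} (hf : IsEmbedding C D f) : C ≤ D :=
  ⟨f, hf⟩

theorem IsEmbedding.le_of_range_subset {C D E : PointConfig} {f : C.Pt → E.Pt} {g : D.Pt → E.Pt}
    (hf : IsEmbedding C E f) (hg : IsEmbedding D E g) (h : Set.range f ⊆ Set.range g) : C ≤ D := by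
  choose e he using fun x => h (Set.mem_range_self x)
  obtain rfl : f = g ∘ e := funext fun x => (he x).symm
  exact (hg.of_comp hf).le

theorem IsEmbedding.antisymmRel_of_surjective {C D : PointConfig} {f : C.Pt → D.Pt}
    (hf : IsEmbedding C D f) (hsurj : f.Surjective) : AntisymmRel (· ≤ ·) C D :=
  ⟨hf.le, (IsEmbedding.id D).le_of_range_subset hf (by simp [hsurj.range_eq])⟩

/-- The configuration obtained by keeping only the points of `T`. -/
def restrict (C : PointConfig) (T : Set C.Pt) : PointConfig where
  Pt := T
  posLT := Subrel C.posLT (· ∈ T)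
  valLT := Subrel C.valLT (· ∈ T)
  posLT_strictTotal := (Subrel.relEmbedding C.posLT (· ∈ T)).isStrictTotalOrder
  valLT_strictTotal := (Subrel.relEmbedding C.valLT (· ∈ T)).isStrictTotalOrder

theorem isEmbedding_subtypeVal (C : PointConfig) (T : Set C.Pt) :
    IsEmbedding (C.restrict T) C Subtype.val :=
  ⟨fun _ _ => Iff.rfl, fun _ _ => Iff.rfl⟩

theorem restrict_mono (C : PointConfig) : Monotone C.restrict := fun _ _ h =>
  ⟨Set.inclusion h, fun _ _ => Iff.rfl, fun _ _ => Iff.rfl⟩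

/-- `T` consists of the highest points of `C`. -/
def IsValUpper (C : PointConfig) (T : Set C.Pt) : Prop :=
  ∀ ⦃x y⦄, C.valLT x y → x ∈ T → y ∈ T

theorem IsValUpper.total {C : PointConfig} {T U : Set C.Pt} (hT : C.IsValUpper T)
    (hU : C.IsValUpper U) : T ⊆ U ∨ U ⊆ T := by
  let := linearOrderOfSTO C.valLT
  have upper {V : Set C.Pt} (hV : C.IsValUpper V) : IsUpperSet V := fun x y hxy hx =>
    hxy.elim (· ▸ hx) (hV · hx)
  exact (upper hT).total (upper hU)

end PointConfig

namespace PPerm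

/-- The points `(i, σ i)` of the plot of `σ`, indexed by `i`. -/
def toConfig (σ : PPerm) : PointConfig where
  Pt := Fin σ.1
  posLT := (· < ·)
  valLT i j := σ.2 i < σ.2 j
  valLT_strictTotal := σ.2.injective.isStrictTotalOrder_onFun (r := (· < ·))

theorem toConfig_le_iff {σ π : PPerm} : σ.toConfig ≤ π.toConfig ↔ σ ≤ π := by
  constructor
  · exact fun ⟨f, hf⟩ => ⟨f, fun x y => (hf.pos_iff x y).1, hf.val_iff⟩
  · exact fun ⟨f, hf, hval⟩ => ⟨f, fun _ _ => hf.lt_iff_lt.symm, hval⟩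

end PPerm

/-- The increasing enumeration of a finite strictly totally ordered set. -/
noncomputable def rankIso {X : Type*} [Finite X] (r : X → X → Prop) [IsStrictTotalOrder X r] :
    r ≃r ((· < ·) : Fin (Nat.card X) → Fin (Nat.card X) → Prop) :=
  letI := Fintype.ofFinite X
  letI := linearOrderOfSTO r
  (Fintype.orderIsoFinOfCardEq X Nat.card_eq_fintype_card.symm).symm.toRelIsoLT

namespace PointConfig

/-- The standardization of `C`: the permutation order isomorphic to it. -/
noncomputable def std (C : PointConfig) : PPerm :=
  ⟨Nat.card C.Pt, (rankIso C.posLT).symm.toEquiv.trans (rankIso C.valLT).toEquiv⟩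

theorem toConfig_std (C : PointConfig) : AntisymmRel (· ≤ ·) C C.std.toConfig := by
  refine IsEmbedding.antisymmRel_of_surjective (f := rankIso C.posLT) ⟨fun x y => ?_, fun x y => ?_⟩
    (rankIso C.posLT).surjective
  · exact (rankIso C.posLT).map_rel_iff.symm
  · simp [PPerm.toConfig, std, (rankIso C.valLT).map_rel_iff]

theorem le_std_iff {C : PointConfig} {σ : PPerm} : σ ≤ C.std ↔ σ.toConfig ≤ C := by
  rw [← PPerm.toConfig_le_iff, C.toConfig_std.le_congr_right]

theorem std_le_iff {C : PointConfig} {σ : PPerm} : C.std ≤ σ ↔ C ≤ σ.toConfig := by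
  rw [← PPerm.toConfig_le_iff, C.toConfig_std.le_congr_left]

end PointConfig

/-- A configuration cut by a vertical line, `left` being the points on its left. This is the datum
of the lower part `α` of a wedge together with the place `k` where `β` is inserted. -/
structure CutConfig extends PointConfig where
  left : Set Pt
  left_of_posLT : ∀ ⦃x y⦄, posLT x y → y ∈ left → x ∈ left

namespace CutConfig

open PointConfig

/-- The cut configuration obtained by keeping only the points of `S`. -/
def restrict (A : CutConfig) (S : Set A.Pt) : CutConfig where
  toPointConfig := A.toPointConfig.restrict S
  left := Subtype.val ⁻¹' A.left
  left_of_posLT _ _ h := A.left_of_posLT h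

/-- The left-to-right order of a wedge, in which the points of `D` are inserted at the cut of
`A`. -/
def wedgePosLT (A : CutConfig) (D : PointConfig) : A.Pt ⊕ D.Pt → A.Pt ⊕ D.Pt → Prop
  | .inl a, .inl a' => A.posLT a a'
  | .inl a, .inr _ => a ∈ A.left
  | .inr _, .inl a => a ∉ A.left
  | .inr d, .inr d' => D.posLT d d'

instance (A : CutConfig) (D : PointConfig) : IsStrictTotalOrder _ (A.wedgePosLT D) where
  irrefl := by
    rintro (a | d)
    exacts [irrefl_of A.posLT a, irrefl_of D.posLT d]
  trans := by
    rintro (a | d) (a' | d') (a'' | d'') h h' <;> simp only [wedgePosLT] at h h' ⊢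
    · exact trans_of A.posLT h h'
    · exact A.left_of_posLT h h'
    · exact (trichotomous_of A.posLT a a'').resolve_right (by
        rintro (rfl | hlt)
        exacts [h' h, h' (A.left_of_posLT hlt h)])
    · exact h
    · exact fun ha => h (A.left_of_posLT h' ha)
    · exact absurd h' h
    · exact h'
    · exact trans_of D.posLT h h'
  trichotomous := by
    rintro (a | d) (a' | d') h h' <;> simp only [wedgePosLT] at h h'
    · rw [Std.Trichotomous.trichotomous a a' h h']
    · exact absurd h h'
    · exact absurd h' h
    · rw [Std.Trichotomous.trichotomous d d' h h']

/-- The wedge of `A` and `D`: all points of `D` lie above those of `A`, and horizontally they are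
inserted at the cut. -/
def wedge (A : CutConfig) (D : PointConfig) : PointConfig where
  Pt := A.Pt ⊕ D.Pt
  posLT := A.wedgePosLT D
  valLT := Sum.Lex A.valLT D.valLT
  valLT_strictTotal := { }

theorem isEmbedding_wedge_sumMap {A B : CutConfig} {C D : PointConfig} {e : A.Pt → B.Pt}
    {f : C.Pt → D.Pt} (he : IsEmbedding A.toPointConfig B.toPointConfig e)
    (hleft : ∀ a, a ∈ A.left ↔ e a ∈ B.left) (hf : IsEmbedding C D f) :
    IsEmbedding (A.wedge C) (B.wedge D) (Sum.map e f) := by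
  constructor
  · rintro (a | c) (a' | c')
    exacts [he.pos_iff a a', hleft a, not_congr (hleft a'), hf.pos_iff c c']
  · rintro (a | c) (a' | c')
    · simpa [wedge] using he.val_iff a a'
    · simp [wedge]
    · simp [wedge]
    · simpa [wedge] using hf.val_iff c c'

theorem isEmbedding_wedge_inr (A : CutConfig) (D : PointConfig) :
    IsEmbedding D (A.wedge D) Sum.inr :=
  ⟨fun _ _ => Iff.rfl, fun _ _ => Sum.lex_inr_inr.symm⟩

theorem wedge_mono (A : CutConfig) : Monotone A.wedge := fun _ _ ⟨_, hf⟩ =>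
  (isEmbedding_wedge_sumMap (.id _) (fun _ => Iff.rfl) hf).le

theorem isEmbedding_restrict_wedge (A : CutConfig) (S : Set A.Pt) {C D : PointConfig}
    {f : C.Pt → D.Pt} (hf : IsEmbedding C D f) :
    IsEmbedding ((A.restrict S).wedge C) (A.wedge D) (Sum.map Subtype.val f) :=
  isEmbedding_wedge_sumMap (A := A.restrict S) (isEmbedding_subtypeVal _ S) (fun _ => Iff.rfl) hf

theorem restrict_wedge_le (A : CutConfig) (S : Set A.Pt) (D : PointConfig) :
    (A.restrict S).wedge D ≤ A.wedge D :=
  (A.isEmbedding_restrict_wedge S (.id D)).le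

theorem exists_restrict_of_le_wedge {A : CutConfig} {C D : PointConfig} (h : C ≤ A.wedge D) :
    ∃ T, C.IsValUpper T ∧ C.restrict T ≤ D ∧
      ∃ S, AntisymmRel (· ≤ ·) C ((A.restrict S).wedge (C.restrict T)) := by
  obtain ⟨f, hf⟩ := h
  let T : Set C.Pt := {x | ∃ d, f x = Sum.inr d}
  let S : Set A.Pt := {a | ∃ x, f x = Sum.inl a}
  choose g hg using fun x : T => x.2
  have hgD : IsEmbedding (C.restrict T) D g := by
    refine (A.isEmbedding_wedge_inr D).of_comp ?_
    have hfg : f ∘ Subtype.val = Sum.inr ∘ g := funext hg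
    exact hfg ▸ hf.comp (C.isEmbedding_subtypeVal T)
  have hj := A.isEmbedding_restrict_wedge S hgD
  refine ⟨T, ?_, hgD.le, S, hf.le_of_range_subset hj ?_, hj.le_of_range_subset hf ?_⟩
  · rintro x y hxy ⟨d, hd⟩
    rcases hy : f y with a | d'
    · have := (hf.val_iff x y).1 hxy
      simp [hd, hy, wedge] at this
    · exact ⟨d', hy⟩
  · rintro _ ⟨x, rfl⟩
    rcases hx : f x with a | d
    · exact ⟨Sum.inl ⟨a, x, hx⟩, rfl⟩
    · exact ⟨Sum.inr ⟨x, d, hx⟩, (hg ⟨x, d, hx⟩).symm.trans hx⟩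
  · rintro _ ⟨⟨a, x, hx⟩ | x, rfl⟩
    exacts [⟨x, hx⟩, ⟨x.1, hg x⟩]

theorem exists_isLeast_le_wedge {A : CutConfig} {C D : PointConfig} (h : C ≤ A.wedge D) :
    ∃ E, IsLeast {E | C ≤ A.wedge E} E := by
  have decompose {E : PointConfig} (hE : C ≤ A.wedge E) :
      ∃ T, (C.IsValUpper T ∧ C ≤ A.wedge (C.restrict T)) ∧ C.restrict T ≤ E := by
    obtain ⟨T, hT, hTE, S, hS⟩ := exists_restrict_of_le_wedge hE
    exact ⟨T, ⟨hT, hS.le.trans (A.restrict_wedge_le S _)⟩, hTE⟩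
  obtain ⟨T, hT⟩ := exists_minimal_of_wellFoundedLT
    (fun T => C.IsValUpper T ∧ C ≤ A.wedge (C.restrict T)) ((decompose h).imp fun _ => And.left)
  refine ⟨C.restrict T, hT.1.2, fun E hE => ?_⟩
  obtain ⟨U, hU, hUE⟩ := decompose hE
  have hTU : T ⊆ U := (hT.1.1.total hU.1).elim (·) (hT.2 hU)
  exact (C.restrict_mono hTU).trans hUE

/-- The permutation `A.wedge β`. -/
noncomputable def wedgePerm (A : CutConfig) (β : PPerm) : PPerm :=
  (A.wedge β.toConfig).std

theorem length_wedgePerm (A : CutConfig) (β : PPerm) : (A.wedgePerm β).1 = Nat.card A.Pt + β.1 :=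
  (Nat.card_sum (α := A.Pt) (β := Fin β.1)).trans (by rw [Nat.card_fin])

theorem le_wedgePerm_iff {A : CutConfig} {l β : PPerm} :
    l ≤ A.wedgePerm β ↔ l.toConfig ≤ A.wedge β.toConfig :=
  le_std_iff

theorem wedgePerm_mono (A : CutConfig) : Monotone A.wedgePerm := fun _ _ h =>
  le_wedgePerm_iff.2 <| (le_wedgePerm_iff.1 le_rfl).trans <|
    A.wedge_mono (PPerm.toConfig_le_iff.2 h)

theorem le_wedgePerm (A : CutConfig) (β : PPerm) : β ≤ A.wedgePerm β :=
  le_wedgePerm_iff.2 (A.isEmbedding_wedge_inr _).le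

theorem wedgePerm_eq_self (A : CutConfig) [IsEmpty A.Pt] (β : PPerm) : A.wedgePerm β = β :=
  (PPerm.eq_of_le_of_length_le (A.le_wedgePerm β) (by simp [length_wedgePerm])).symm

theorem one_lt_wedgePerm (A : CutConfig) [Nonempty A.Pt] {β : PPerm} (hβ : PPerm.one ≤ β) :
    PPerm.one < A.wedgePerm β := by
  refine (hβ.trans (A.le_wedgePerm β)).lt_of_ne fun h => ?_
  have hlen : 1 = Nat.card A.Pt + β.1 := (congrArg Sigma.fst h).trans (A.length_wedgePerm β)
  have := Nat.card_pos (α := A.Pt)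
  have := PPerm.one_le_iff.1 hβ
  omega

/-- `γ` is the top part of `l` relative to `A`: the least nonempty permutation whose wedge with `A`
contains `l`. Leaving out the empty permutation ensures that the wedge is not `1` when `A` is a
single point, so that the Möbius function sums to zero below it. -/
def IsTop (A : CutConfig) (l γ : PPerm) : Prop :=
  IsLeast {δ | PPerm.one ≤ δ ∧ l ≤ A.wedgePerm δ} γ

theorem IsTop.le_iff {A : CutConfig} {l γ δ : PPerm} (h : A.IsTop l γ)
    (hδ : PPerm.one ≤ δ) : l ≤ A.wedgePerm δ ↔ γ ≤ δ :=
  ⟨fun hl => h.2 ⟨hδ, hl⟩, fun hγ => h.1.2.trans (A.wedgePerm_mono hγ)⟩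

theorem exists_isTop {A : CutConfig} {l β : PPerm} (h : l ≤ A.wedgePerm β) :
    ∃ γ, A.IsTop l γ := by
  obtain ⟨E, hE, hleast⟩ := exists_isLeast_le_wedge (le_wedgePerm_iff.1 h)
  have hl : l ≤ A.wedgePerm E.std := le_wedgePerm_iff.2 (hE.trans (A.wedge_mono E.toConfig_std.le))
  rcases E.std.one_le_or_le_one with h1 | h1
  · exact ⟨E.std, ⟨h1, hl⟩, fun δ hδ => std_le_iff.2 (hleast (le_wedgePerm_iff.1 hδ.2))⟩
  · exact ⟨PPerm.one, ⟨le_rfl, hl.trans (A.wedgePerm_mono h1)⟩, fun δ hδ => hδ.1⟩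

theorem isTop_wedgePerm_self (A : CutConfig) {β : PPerm} (hβ : PPerm.one ≤ β) :
    A.IsTop (A.wedgePerm β) β := by
  obtain ⟨γ, hγ⟩ := exists_isTop (le_refl (A.wedgePerm β))
  have hlen := PPerm.length_le_of_le hγ.1.2
  rw [length_wedgePerm, length_wedgePerm, Nat.add_le_add_iff_left] at hlen
  obtain rfl := PPerm.eq_of_le_of_length_le ((hγ.le_iff hβ).1 le_rfl) hlen
  exact hγ

theorem IsTop.exists_eq_wedgePerm_restrict {A : CutConfig} {l β : PPerm} (h : A.IsTop l β)
    (hβ : PPerm.one < β) : ∃ S, l = (A.restrict S).wedgePerm β := by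
  obtain ⟨T, -, hTβ, S, hS⟩ := exists_restrict_of_le_wedge (le_wedgePerm_iff.1 h.1.2)
  set γ := (l.toConfig.restrict T).std
  have hlγ : l ≤ A.wedgePerm γ :=
    le_wedgePerm_iff.2 <| hS.le.trans <| (A.restrict_wedge_le S _).trans <|
      A.wedge_mono (toConfig_std _).le
  have hβγ : β ≤ γ := by
    rcases γ.one_le_or_le_one with h1 | h1
    · exact h.2 ⟨h1, hlγ⟩
    · exact absurd (h.2 ⟨le_rfl, hlγ.trans (A.wedgePerm_mono h1)⟩) hβ.not_ge
  refine ⟨S, le_antisymm (le_wedgePerm_iff.2 ?_) (PPerm.toConfig_le_iff.1 ?_)⟩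
  · exact hS.le.trans ((A.restrict S).wedge_mono hTβ)
  · exact (le_wedgePerm_iff.1 le_rfl).trans <|
      ((A.restrict S).wedge_mono (le_std_iff.1 hβγ)).trans hS.ge

theorem sum_isTop_mu_eq_zero (A : CutConfig) [Nonempty A.Pt] {β : PPerm} (hβ : PPerm.one ≤ β) :
    ∑ l ∈ intervalCC PPerm.one (A.wedgePerm β) with A.IsTop l β, mu PPerm.one l = 0 := by
  set s := intervalCC PPerm.one (A.wedgePerm β)
  choose! top htop using fun l (hl : l ∈ s) => exists_isTop (mem_intervalCC.1 hl).2
  have hself : A.wedgePerm β ∈ s := mem_intervalCC.2 ⟨(A.one_lt_wedgePerm hβ).le, le_rfl⟩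
  have htop_self : top (A.wedgePerm β) = β :=
    (htop _ hself).unique (A.isTop_wedgePerm_self hβ)
  have hsum : ∀ i ∈ s, ∑ l ∈ s with top l ≤ top i, mu PPerm.one l = 0 := by
    intro i hi
    have htop_le : A.wedgePerm (top i) ≤ A.wedgePerm β :=
      A.wedgePerm_mono <| ((htop i hi).le_iff hβ).1 (mem_intervalCC.1 hi).2
    rw [← sum_intervalCC_mu (A.one_lt_wedgePerm (htop i hi).1.1)]
    refine Finset.sum_congr (Finset.ext fun l => ?_) fun _ _ => rfl
    rw [Finset.mem_filter, mem_intervalCC (π := A.wedgePerm (top i))]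
    constructor
    · rintro ⟨hl, hle⟩
      exact ⟨(mem_intervalCC.1 hl).1, ((htop l hl).le_iff (htop i hi).1.1).2 hle⟩
    · rintro ⟨h1, hle⟩
      have hl : l ∈ s := mem_intervalCC.2 ⟨h1, hle.trans htop_le⟩
      exact ⟨hl, ((htop l hl).le_iff (htop i hi).1.1).1 hle⟩
  rw [← sum_fiber_eq_zero_of_sum_le_eq_zero (f := top) hsum hself, htop_self]
  refine Finset.sum_congr (Finset.filter_congr fun l hl => ?_) fun _ _ => rfl
  exact ⟨(htop l hl).unique, (· ▸ htop l hl)⟩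

theorem mu_dvd_mu_wedgePerm (A : CutConfig) {β : PPerm} (hβ : PPerm.one < β) :
    mu PPerm.one β ∣ mu PPerm.one (A.wedgePerm β) := by
  induction hn : Nat.card A.Pt using Nat.strong_induction_on generalizing A with
  | _ n ih =>
    cases isEmpty_or_nonempty A.Pt with
    | inl _ => rw [A.wedgePerm_eq_self]
    | inr _ =>
      have hself : A.wedgePerm β ∈
          (intervalCC PPerm.one (A.wedgePerm β)).filter (A.IsTop · β) :=
        Finset.mem_filter.2 ⟨mem_intervalCC.2 ⟨(A.one_lt_wedgePerm hβ.le).le, le_rfl⟩,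
          A.isTop_wedgePerm_self hβ.le⟩
      have hsum := A.sum_isTop_mu_eq_zero hβ.le
      rw [← Finset.add_sum_erase _ _ hself] at hsum
      refine (dvd_add_left (Finset.dvd_sum fun l hl => ?_)).1 (hsum ▸ dvd_zero _)
      obtain ⟨hne, hl⟩ := Finset.mem_erase.1 hl
      obtain ⟨hl, htop⟩ := Finset.mem_filter.1 hl
      obtain ⟨S, rfl⟩ := htop.exists_eq_wedgePerm_restrict hβ
      have hlen := PPerm.length_strictMono ((mem_intervalCC.1 hl).2.lt_of_ne hne)
      simp only [length_wedgePerm, Nat.add_lt_add_iff_right] at hlen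
      exact ih _ (hn ▸ hlen) _ rfl

end CutConfig

namespace PPerm

/-- The plot of `α`, cut between the entries `α(k)` and `α(k+1)` (indexed from `1`). -/
def cut (α : PPerm) (k : ℕ) : CutConfig where
  toPointConfig := α.toConfig
  left := {i : Fin α.1 | (i : ℕ) < k}
  left_of_posLT _ _ := lt_trans (α := ℕ)

/-- The position in `W_k(α,β)` of an entry of `α` or `β`; positions are indexed from `0`. -/
def wedgePosition (α β : PPerm) (k : ℕ) : Fin α.1 ⊕ Fin β.1 → ℕ
  | .inl s => if (s : ℕ) < k then s else β.1 + s
  | .inr t => k + t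

theorem wedgePosition_lt {α β : PPerm} {k : ℕ} (hk : k ≤ α.1) (z : Fin α.1 ⊕ Fin β.1) :
    wedgePosition α β k z < α.1 + β.1 := by
  rcases z with s | t <;> grind [wedgePosition]

theorem wedgePosition_lt_wedgePosition_iff {α β : PPerm} {k : ℕ} (z z' : Fin α.1 ⊕ Fin β.1) :
    wedgePosition α β k z < wedgePosition α β k z' ↔
      ((α.cut k).wedge β.toConfig).posLT z z' := by
  rcases z with s | t <;> rcases z' with s' | t' <;> simp only [wedgePosition]
  · change _ ↔ (s : ℕ) < s'
    grind
  · change _ ↔ (s : ℕ) < k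
    grind
  · change _ ↔ ¬ (s' : ℕ) < k
    grind
  · change _ ↔ (t : ℕ) < t'
    grind

end PPerm

namespace IsWedge

open PPerm

variable {α β π : PPerm} {k : ℕ}

theorem wedge_cut_le_toConfig (hk : k ≤ α.1) (h : IsWedge α β k π) :
    (α.cut k).wedge β.toConfig ≤ π.toConfig := by
  obtain ⟨hlen, hα, hβ⟩ := h
  let g (z : Fin α.1 ⊕ Fin β.1) : Fin π.1 :=
    ⟨wedgePosition α β k z, (wedgePosition_lt hk z).trans_eq hlen.symm⟩
  have hval_inl (s : Fin α.1) : (π.2 (g (.inl s)) : ℕ) = α.2 s :=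
    hα s _ (by grind [wedgePosition])
  have hval_inr (t : Fin β.1) : (π.2 (g (.inr t)) : ℕ) = α.1 + β.2 t := hβ t _ rfl
  refine ⟨g, fun z z' => wedgePosition_lt_wedgePosition_iff z z' |>.symm, ?_⟩
  change ∀ z z' : Fin α.1 ⊕ Fin β.1,
    Sum.Lex (fun s s' => α.2 s < α.2 s') (fun t t' => β.2 t < β.2 t') z z' ↔
      (π.2 (g z) : ℕ) < π.2 (g z')
  rintro (s | t) (s' | t')
  · rw [hval_inl, hval_inl, Sum.lex_inl_inl, Fin.lt_def]
  · rw [hval_inl, hval_inr]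
    exact iff_of_true (Sum.Lex.sep s t') ((α.2 s).isLt.trans_le (Nat.le_add_right _ _))
  · rw [hval_inl, hval_inr]
    exact iff_of_false Sum.lex_inr_inl (by have := (α.2 s').isLt; omega)
  · rw [hval_inr, hval_inr, Sum.lex_inr_inr, Nat.add_lt_add_iff_left, Fin.lt_def]

theorem eq_wedgePerm_cut (hk : k ≤ α.1) (h : IsWedge α β k π) : π = (α.cut k).wedgePerm β := by
  refine (eq_of_le_of_length_le (toConfig_le_iff.1 ?_) ?_).symm
  · exact (CutConfig.le_wedgePerm_iff.1 le_rfl).trans (h.wedge_cut_le_toConfig hk)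
  · rw [CutConfig.length_wedgePerm, h.1]
    simp [cut, toConfig]

end IsWedge

/-- **(Theorem `theorem-wedge-permutations-multiple-of-beta`.)**  For
nonempty permutations `α`, `β` and `0 ≤ k ≤ |α|`, the principal Möbius
function of the wedge permutation `W_k(α,β)` is an integer multiple of the
principal Möbius function of `β`. -/
theorem mu_wedge_multiple_of_mu (α β π : PPerm) (hα : 0 < α.1) (hβ : 0 < β.1)
    (k : ℕ) (hk : k ≤ α.1) (hπ : IsWedge α β k π) :
    ∃ c : ℤ, mu PPerm.one π = c * mu PPerm.one β := by
  rcases (PPerm.one_le_iff.2 hβ).eq_or_lt with rfl | hβ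
  · exact ⟨mu PPerm.one π, by rw [mu_self, mul_one]⟩
  · rw [hπ.eq_wedgePerm_cut hk]
    exact exists_eq_mul_left_of_dvd ((α.cut k).mu_dvd_mu_wedgePerm hβ)
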